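/- Let X be a compact forward invariant set (g(X) ⊂ X) with P_g ⊂ X, and define X_* = {x ∈ hull(X) : GO(x) ⊂ hull(X)}. Then X_* is the maximal (possibly empty) compact set with g⁻¹(X_*) = X_* which is contained in hull(X); furthermore, X_* is a full compact set. -/

import Mathlib

open Set Function Metric Topology Filter

noncomputable section

/-- A topological disk: a (nonempty, connected) simply connected planar domain. -/
def IsTopDisk (V : Set ℂ) : Prop :=
  IsOpen V ∧ IsConnected V ∧ SimplyConnectedSpace V

/-- Critical points of `g` lying in `U'`. -/
def critPts (g : ℂ → ℂ) (U' : Set ℂ) : Set ℂ := {z | z ∈ U' ∧ deriv g z = 0}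

/-- The postcritical set of `g : U' → U`. -/
def postCrit (g : ℂ → ℂ) (U' : Set ℂ) : Set ℂ :=
  closure (⋃ n : ℕ, g^[n] '' critPts g U')

/-- `g : U' → U` is a proper map: preimages of compact subsets of `U` are compact. -/
def ProperOn (g : ℂ → ℂ) (U' U : Set ℂ) : Prop :=
  ∀ K : Set ℂ, K ⊆ U → IsCompact K → IsCompact (U' ∩ g ⁻¹' K)

/-- `g : U' → U` has degree `d`: every point of `U` has a preimage, and every point of `U`
which is not a critical value has exactly `d` preimages in `U'`. -/
def HasDeg (g : ℂ → ℂ) (U' U : Set ℂ) (d : ℕ) : Prop :=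
  (∀ w ∈ U, (U' ∩ g ⁻¹' {w}).Nonempty) ∧
  ∀ w ∈ U, w ∉ g '' critPts g U' → (U' ∩ g ⁻¹' {w}).ncard = d

/-- Standing assumptions: `U' ⊆ U` are simply connected domains in `ℂ` with `U' ≠ U`,
`g : U' → U` is a proper holomorphic map of degree `d ≥ 2`, all forward iterates of the
critical points are defined, the postcritical set is a compact subset of `U'`, and if the
postcritical set is a singleton `{c}` then `g⁻¹(c) ≠ {c}`. -/
structure PLSetting (g : ℂ → ℂ) (U' U : Set ℂ) (d : ℕ) : Prop where
  disk' : IsTopDisk U'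
  disk : IsTopDisk U
  subset : U' ⊆ U
  ne : U' ≠ U
  two_le_d : 2 ≤ d
  holo : DifferentiableOn ℂ g U'
  mapsTo : MapsTo g U' U
  proper : ProperOn g U' U
  deg : HasDeg g U' U d
  crit_orbit : ∀ c ∈ critPts g U', ∀ n : ℕ, g^[n] c ∈ U'
  postCrit_compact : IsCompact (postCrit g U')
  postCrit_subset : postCrit g U' ⊆ U'
  postCrit_singleton : ∀ c : ℂ, postCrit g U' = {c} → U' ∩ g ⁻¹' {c} ≠ {c}

/-- The topological hull of `X`: the complement of the unbounded component of `ℂ \ X`. -/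
def topHull (X : Set ℂ) : Set ℂ :=
  {z | Bornology.IsBounded (connectedComponentIn Xᶜ z)}

/-- The grand orbit of `x`: points `z` (with iterates defined) such that
`g^m(z) = g^n(x)` for some `m, n ≥ 0`. -/
def grandOrbit (g : ℂ → ℂ) (U' : Set ℂ) (x : ℂ) : Set ℂ :=
  {z | ∃ m n : ℕ, (∀ k < m, g^[k] z ∈ U') ∧ g^[m] z = g^[n] x}

/-!
The set `X_*` contains every completely invariant subset of `hull(X)`, and it is itself completely
invariant because a grand orbit is shared by a point and its image. Since `g` is open, continuous
and proper, complete invariance passes from a set to its closure and from a compact set to its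
hull. Both the closure and the hull of `X_*` stay in `hull(X)`, hence equal `X_*` by maximality.
That `hull(X)` lies in `U'` at all is Eilenberg's criterion: `z - p` has no continuous logarithm
on `X` when `p` is in the hull, but has one on the simply connected `U'` if `p` is outside it.
-/

/-! ### Complements of balls and the circle -/

lemma isPreconnected_compl_closedBall {E : Type*} [NormedAddCommGroup E] [NormedSpace ℝ E]
    (h : 1 < Module.rank ℝ E) (x : E) (r : ℝ) : IsPreconnected (closedBall x r)ᶜ := by
  rcases lt_or_ge r 0 with hr | hr
  · simpa only [closedBall_eq_empty.2 hr, compl_empty] using isPreconnected_univ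
  have polar : (closedBall x r)ᶜ = (fun q : ℝ × E => x + q.1 • q.2) '' Ioi r ×ˢ sphere 0 1 := by
    ext y
    simp only [mem_compl_iff, mem_closedBall, not_le, mem_image, mem_prod, mem_Ioi,
      mem_sphere_zero_iff_norm, Prod.exists, dist_eq_norm]
    constructor
    · intro hy
      have hne : ‖y - x‖ ≠ 0 := (hr.trans_lt hy).ne'
      refine ⟨‖y - x‖, ‖y - x‖⁻¹ • (y - x), ⟨hy, ?_⟩, ?_⟩
      · rw [norm_smul, norm_inv, norm_norm, inv_mul_cancel₀ hne]
      · rw [smul_inv_smul₀ hne, add_sub_cancel]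
    · rintro ⟨t, v, ⟨ht, hv⟩, rfl⟩
      rwa [add_sub_cancel_left, norm_smul, hv, mul_one, Real.norm_of_nonneg (hr.trans ht.le)]
  rw [polar]
  exact (isPreconnected_Ioi.prod (isPreconnected_sphere h 0 1)).image _ (by fun_prop)

lemma exists_mem_cobounded_isPreconnected_subset_compl {E : Type*} [NormedAddCommGroup E]
    [NormedSpace ℝ E] (h : 1 < Module.rank ℝ E) {A : Set E} (hA : Bornology.IsBounded A) :
    ∃ V ∈ Bornology.cobounded E, IsPreconnected V ∧ V ⊆ Aᶜ := by
  obtain ⟨r, hr⟩ := hA.subset_closedBall 0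
  exact ⟨(closedBall 0 r)ᶜ, isBounded_closedBall, isPreconnected_compl_closedBall h 0 r,
    compl_subset_compl.2 hr⟩

lemma not_exists_continuousOn_log_sphere (p : ℂ) {R : ℝ} (hR : 0 < R) :
    ¬ ∃ L : ℂ → ℂ, ContinuousOn L (sphere p R) ∧
      ∀ z ∈ sphere p R, Complex.exp (L z) = z - p := by
  rintro ⟨L, hL, hexp⟩
  have lift_eq : (fun t => L (circleMap p R t)) =
      fun t : ℝ => L (circleMap p R 0) + t * Complex.I := by
    have hcirc : ∀ t, circleMap p R t ∈ sphere p R := circleMap_mem_sphere p hR.le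
    refine Complex.isCoveringMap_exp.eq_of_comp_eq
      (hL.comp_continuous (continuous_circleMap p R) hcirc) (by fun_prop) ?_ 0 (by simp)
    funext t
    apply Subtype.ext
    change Complex.exp (L (circleMap p R t)) = Complex.exp (L (circleMap p R 0) + t * Complex.I)
    rw [Complex.exp_add, hexp _ (hcirc t), hexp _ (hcirc 0)]
    simp [circleMap]
  have hturn := congrFun lift_eq (2 * Real.pi)
  have hperiod : circleMap p R (2 * Real.pi) = circleMap p R 0 := by simp [circleMap]
  simp only [hperiod, left_eq_add] at hturn
  simp [Real.pi_ne_zero] at hturn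

/-! ### Topological hulls -/

lemma subset_topHull (A : Set ℂ) : A ⊆ topHull A := by
  intro z hz
  change Bornology.IsBounded (connectedComponentIn Aᶜ z)
  rw [connectedComponentIn_eq_empty (notMem_compl_iff.2 hz)]
  exact Bornology.isBounded_empty

lemma mem_topHull_iff_of_mem_connectedComponentIn {A : Set ℂ} {z w : ℂ}
    (hw : w ∈ connectedComponentIn Aᶜ z) : w ∈ topHull A ↔ z ∈ topHull A := by
  simp only [topHull, mem_ofPred_eq, connectedComponentIn_eq hw]

lemma connectedComponentIn_subset_compl_topHull {A : Set ℂ} {z : ℂ} (hz : z ∉ topHull A) :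
    connectedComponentIn Aᶜ z ⊆ (topHull A)ᶜ :=
  fun _ hw => mt (mem_topHull_iff_of_mem_connectedComponentIn hw).1 hz

lemma connectedComponentIn_compl_mem_cobounded {A : Set ℂ} (hA : Bornology.IsBounded A) {z : ℂ}
    (hz : z ∉ topHull A) : connectedComponentIn Aᶜ z ∈ Bornology.cobounded ℂ := by
  obtain ⟨E, hE, hEconn, hEA⟩ :=
    exists_mem_cobounded_isPreconnected_subset_compl (by simp [Complex.rank_real_complex]) hA
  obtain ⟨w, hw, hwE⟩ : (connectedComponentIn Aᶜ z ∩ E).Nonempty := by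
    by_contra hdisj
    have hsub : connectedComponentIn Aᶜ z ⊆ Eᶜ := fun w hw hwE => hdisj ⟨w, hw, hwE⟩
    exact hz ((Bornology.isBounded_compl_iff.2 hE).subset hsub)
  rw [connectedComponentIn_eq hw]
  exact mem_of_superset hE (hEconn.subset_connectedComponentIn hwE hEA)

lemma isBounded_topHull {A : Set ℂ} (hA : Bornology.IsBounded A) :
    Bornology.IsBounded (topHull A) := by
  obtain ⟨E, hE, hEconn, hEA⟩ :=
    exists_mem_cobounded_isPreconnected_subset_compl (by simp [Complex.rank_real_complex]) hA
  refine Bornology.isBounded_def.2 (mem_of_superset hE fun z hz hzA => ?_)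
  have hEbdd : Bornology.IsBounded E :=
    Bornology.IsBounded.subset hzA (hEconn.subset_connectedComponentIn hz hEA)
  exact compl_notMem hE hEbdd

lemma isConnected_compl_topHull {A : Set ℂ} (hA : Bornology.IsBounded A) :
    IsConnected (topHull A)ᶜ := by
  refine ⟨Filter.nonempty_of_mem (isBounded_topHull hA), isPreconnected_of_forall_pair ?_⟩
  intro z hz w hw
  obtain ⟨y, hyz, hyw⟩ := Filter.nonempty_of_mem <| inter_mem
    (connectedComponentIn_compl_mem_cobounded hA hz)
    (connectedComponentIn_compl_mem_cobounded hA hw)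
  have hzw : connectedComponentIn Aᶜ z = connectedComponentIn Aᶜ w :=
    (connectedComponentIn_eq hyz).trans (connectedComponentIn_eq hyw).symm
  refine ⟨connectedComponentIn Aᶜ z, connectedComponentIn_subset_compl_topHull hz,
    mem_connectedComponentIn fun h => hz (subset_topHull A h), ?_,
    isPreconnected_connectedComponentIn⟩
  rw [hzw]
  exact mem_connectedComponentIn fun h => hw (subset_topHull A h)

lemma isClosed_topHull {A : Set ℂ} (hA : IsClosed A) : IsClosed (topHull A) := by
  refine isOpen_compl_iff.1 (isOpen_iff_mem_nhds.2 fun z hz => ?_)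
  exact mem_of_superset (hA.isOpen_compl.connectedComponentIn.mem_nhds
    (mem_connectedComponentIn fun h => hz (subset_topHull A h)))
    (connectedComponentIn_subset_compl_topHull hz)

lemma isCompact_topHull {A : Set ℂ} (hA : IsCompact A) : IsCompact (topHull A) :=
  isCompact_of_isClosed_isBounded (isClosed_topHull hA.isClosed) (isBounded_topHull hA.isBounded)

lemma isOpen_topHull_diff {A : Set ℂ} (hA : IsClosed A) : IsOpen (topHull A \ A) := by
  refine isOpen_iff_mem_nhds.2 fun z ⟨hz, hzA⟩ => ?_
  refine mem_of_superset (hA.isOpen_compl.connectedComponentIn.mem_nhds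
    (mem_connectedComponentIn hzA)) fun w hw => ?_
  exact ⟨(mem_topHull_iff_of_mem_connectedComponentIn hw).2 hz, connectedComponentIn_subset _ _ hw⟩

lemma frontier_topHull_subset {A : Set ℂ} (hA : IsClosed A) : frontier (topHull A) ⊆ A := by
  rw [(isClosed_topHull hA).frontier_eq]
  rintro z ⟨hz, hzint⟩
  by_contra hzA
  exact hzint (interior_maximal sdiff_subset (isOpen_topHull_diff hA) ⟨hz, hzA⟩)

lemma subset_topHull_of_frontier_subset {A V : Set ℂ} (hV : Bornology.IsBounded V)
    (hfr : frontier V ⊆ A) : V ⊆ topHull A := by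
  intro z hz
  by_cases hzA : z ∈ A
  · exact subset_topHull A hzA
  have hcomp : connectedComponentIn Aᶜ z ⊆ interior V := by
    refine isPreconnected_connectedComponentIn.subset_left_of_subset_union
      isOpen_interior isClosed_closure.isOpen_compl
      (disjoint_compl_right.mono_left interior_subset_closure) ?_
      ⟨z, mem_connectedComponentIn hzA, ?_⟩
    · intro w hw
      refine or_iff_not_imp_left.2 fun hwint hwcl => ?_
      exact connectedComponentIn_subset _ _ hw (hfr ⟨hwcl, hwint⟩)
    · by_contra hzint
      exact hzA (hfr ⟨subset_closure hz, hzint⟩)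
  exact hV.subset (hcomp.trans interior_subset)

lemma topHull_subset_topHull {A B : Set ℂ} (hB : Bornology.IsBounded B) (hAB : A ⊆ topHull B) :
    topHull A ⊆ topHull B := by
  intro z hz
  by_contra hzB
  have hsub : (topHull B)ᶜ ⊆ connectedComponentIn Aᶜ z :=
    (isConnected_compl_topHull hB).isPreconnected.subset_connectedComponentIn hzB
      (compl_subset_compl.2 hAB)
  exact compl_notMem (mem_of_superset (isBounded_topHull hB) hsub) hz

-- One direction of Eilenberg's criterion. A logarithm on `X` extends to the plane by Tietze;
-- replacing `z - p` by its exponential inside the hull gives a nonvanishing function on `ℂ`,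
-- whose logarithm would be one of `z - p` on every large circle.
lemma not_exists_continuousOn_log_of_mem_topHull {X : Set ℂ} (hX : IsCompact X) {p : ℂ}
    (hp : p ∈ topHull X) :
    ¬ ∃ L : ℂ → ℂ, ContinuousOn L X ∧ ∀ z ∈ X, Complex.exp (L z) = z - p := by
  classical
  rintro ⟨L, hL, hexp⟩
  obtain ⟨k, hk⟩ := ContinuousMap.exists_restrict_eq hX.isClosed
    (⟨X.domRestrict L, continuousOn_iff_continuous_domRestrict.1 hL⟩ : C(X, ℂ))
  have hkL : ∀ z ∈ X, k z = L z := fun z hz => congrArg (fun f : C(X, ℂ) => f ⟨z, hz⟩) hk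
  set F : ℂ → ℂ := (topHull X).piecewise (fun z => Complex.exp (k z)) (fun z => z - p) with hF
  have hFcont : Continuous F := by
    refine Continuous.piecewise (fun z hz => ?_) (by fun_prop) (by fun_prop)
    have hzX := frontier_topHull_subset hX.isClosed hz
    rw [hkL z hzX, hexp z hzX]
  have hF0 : ∀ z, F z ≠ 0 := by
    intro z
    by_cases hz : z ∈ topHull X
    · rw [hF, piecewise_eq_of_mem _ _ _ hz]
      exact Complex.exp_ne_zero _
    · rw [hF, piecewise_eq_of_notMem _ _ _ hz, sub_ne_zero]
      exact fun hzp => hz (hzp ▸ hp)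
  obtain ⟨M, hM, hMF⟩ := Complex.exists_continuousOn_eqOn_exp_comp
    ((Homeomorph.Set.univ ℂ).toHomotopyEquiv.simplyConnectedSpace : IsSimplyConnected univ)
    isOpen_univ hFcont.continuousOn (fun ⟨z, _, hz⟩ => hF0 z hz)
  obtain ⟨R, hR, hball⟩ := (isBounded_topHull hX.isBounded).subset_ball_lt 0 p
  refine not_exists_continuousOn_log_sphere p hR ⟨M, hM.mono (subset_univ _), fun z hz => ?_⟩
  have hzX : z ∉ topHull X := fun h => (mem_ball.1 (hball h)).ne (mem_sphere.1 hz)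
  calc Complex.exp (M z) = F z := hMF (mem_univ z)
    _ = z - p := piecewise_eq_of_notMem _ _ _ hzX

lemma topHull_subset_of_isSimplyConnected {V X : Set ℂ} (hV : IsOpen V)
    (hVsc : IsSimplyConnected V) (hX : IsCompact X) (hXV : X ⊆ V) : topHull X ⊆ V := by
  intro p hp
  by_contra hpV
  obtain ⟨L, hL, hexp⟩ := Complex.exists_continuousOn_eqOn_exp_comp hVsc hV
    (g := fun z => z - p) (by fun_prop) (fun ⟨_, hz, hzp⟩ => hpV (sub_eq_zero.1 hzp ▸ hz))
  exact not_exists_continuousOn_log_of_mem_topHull hX hp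
    ⟨L, hL.mono hXV, fun z hz => hexp (hXV hz)⟩

/-! ### Open maps, closures and hulls -/

section OpenMap

lemma inter_preimage_closure_subset {α β : Type*} [TopologicalSpace α] [TopologicalSpace β]
    {f : α → β} {U : Set α} (hU : IsOpen U) (hopen : ∀ s ⊆ U, IsOpen s → IsOpen (f '' s))
    (Y : Set β) : U ∩ f ⁻¹' closure Y ⊆ closure (U ∩ f ⁻¹' Y) := by
  rintro z ⟨hzU, hz⟩
  refine mem_closure_iff.2 fun t ht hzt => ?_
  obtain ⟨_, ⟨w, ⟨hwt, hwU⟩, rfl⟩, hwY⟩ := mem_closure_iff.1 hz _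
    (hopen (t ∩ U) inter_subset_right (ht.inter hU)) (mem_image_of_mem f ⟨hzt, hzU⟩)
  exact ⟨w, hwt, hwU, hwY⟩

lemma inter_preimage_closure_of_inter_preimage_eq {α : Type*} [TopologicalSpace α] {f : α → α}
    {U Y : Set α} (hU : IsOpen U) (hf : ContinuousOn f U)
    (hopen : ∀ s ⊆ U, IsOpen s → IsOpen (f '' s)) (hYU : closure Y ⊆ U)
    (hinv : U ∩ f ⁻¹' Y = Y) : U ∩ f ⁻¹' closure Y = closure Y := by
  have hmaps : MapsTo f Y Y := fun z hz => (hinv.ge hz).2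
  refine Subset.antisymm ?_ (subset_inter hYU (hmaps.closure_of_continuousOn (hf.mono hYU)))
  simpa only [hinv] using inter_preimage_closure_subset hU hopen Y

variable {g : ℂ → ℂ} {U Y : Set ℂ}

lemma inter_preimage_topHull_subset (hU : IsOpen U) (hg : ContinuousOn g U) (hY : IsClosed Y)
    (hcomp : IsCompact (U ∩ g ⁻¹' topHull Y)) :
    U ∩ g ⁻¹' topHull Y ⊆ topHull (U ∩ g ⁻¹' Y) := by
  refine subset_topHull_of_frontier_subset hcomp.isBounded ?_
  rw [hcomp.isClosed.frontier_eq]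
  rintro z ⟨hz, hzint⟩
  by_contra hzY
  exact hzint (interior_maximal (inter_subset_inter_right _ (preimage_mono sdiff_subset))
    (hg.isOpen_inter_preimage hU (isOpen_topHull_diff hY)) ⟨hz.1, hz.2, fun h => hzY ⟨hz.1, h⟩⟩)

lemma image_topHull_subset (hg : ContinuousOn g U)
    (hopen : ∀ s ⊆ U, IsOpen s → IsOpen (g '' s)) (hY : IsCompact Y) (hYU : topHull Y ⊆ U) :
    g '' topHull Y ⊆ topHull (g '' Y) := by
  have hcomp : IsCompact (g '' topHull Y) :=
    (isCompact_topHull hY).image_of_continuousOn (hg.mono hYU)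
  refine subset_topHull_of_frontier_subset hcomp.isBounded ?_
  rw [hcomp.isClosed.frontier_eq]
  rintro _ ⟨⟨z, hz, rfl⟩, hzint⟩
  by_contra hzY
  exact hzint (interior_maximal (image_mono sdiff_subset)
    (hopen _ (sdiff_subset.trans hYU) (isOpen_topHull_diff hY.isClosed))
    (mem_image_of_mem g ⟨hz, fun h => hzY (mem_image_of_mem g h)⟩))

lemma inter_preimage_topHull_of_inter_preimage_eq (hU : IsOpen U) (hg : ContinuousOn g U)
    (hopen : ∀ s ⊆ U, IsOpen s → IsOpen (g '' s)) (hY : IsCompact Y) (hYU : topHull Y ⊆ U)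
    (hcomp : IsCompact (U ∩ g ⁻¹' topHull Y)) (hinv : U ∩ g ⁻¹' Y = Y) :
    U ∩ g ⁻¹' topHull Y = topHull Y := by
  have himage : g '' Y ⊆ topHull Y :=
    image_subset_iff.2 fun z hz => subset_topHull Y (hinv.ge hz).2
  refine Subset.antisymm ?_ (subset_inter hYU (image_subset_iff.1 ?_))
  · simpa only [hinv] using inter_preimage_topHull_subset hU hg hY.isClosed hcomp
  · exact (image_topHull_subset hg hopen hY hYU).trans
      (topHull_subset_topHull hY.isBounded himage)

end OpenMap

/-! ### Grand orbits -/

lemma mem_grandOrbit_self (g : ℂ → ℂ) (U' : Set ℂ) (x : ℂ) : x ∈ grandOrbit g U' x :=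
  ⟨0, 0, by simp, rfl⟩

lemma grandOrbit_apply (g : ℂ → ℂ) {U' : Set ℂ} {x : ℂ} (hx : x ∈ U') :
    grandOrbit g U' (g x) = grandOrbit g U' x := by
  ext z
  constructor
  · rintro ⟨m, n, hz, hmn⟩
    exact ⟨m, n + 1, hz, hmn⟩
  · rintro ⟨m, _ | n, hz, hmn⟩
    · refine ⟨m + 1, 0, fun k hk => ?_, by rw [iterate_succ_apply', hmn]; rfl⟩
      rcases Nat.lt_succ_iff_lt_or_eq.1 hk with hk | rfl
      · exact hz k hk
      · exact hmn ▸ hx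
    · exact ⟨m, n, hz, hmn⟩

lemma grandOrbit_subset_of_inter_preimage_eq {g : ℂ → ℂ} {U' Y : Set ℂ} {x : ℂ}
    (hinv : U' ∩ g ⁻¹' Y = Y) (hx : x ∈ Y) : grandOrbit g U' x ⊆ Y := by
  have forward : MapsTo g Y Y := fun z hz => (hinv.ge hz).2
  have backward : ∀ m z, (∀ k < m, g^[k] z ∈ U') → g^[m] z ∈ Y → z ∈ Y := by
    intro m
    induction m with
    | zero => exact fun _ _ hz => hz
    | succ m ih =>
      intro z hz hzY
      refine ih z (fun k hk => hz k (hk.trans m.lt_succ_self)) (hinv.le ⟨hz m m.lt_succ_self, ?_⟩)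
      rwa [mem_preimage, ← iterate_succ_apply' g]
  rintro z ⟨m, n, hz, hmn⟩
  exact backward m z hz (hmn ▸ forward.iterate n hx)

/-- The points of `K` whose whole grand orbit under `g : U' → ℂ` stays in `K`; for
`K = topHull X` this is the set `X_*` of the theorem. -/
def invariantCore (g : ℂ → ℂ) (U' K : Set ℂ) : Set ℂ :=
  {x ∈ K | grandOrbit g U' x ⊆ K}

lemma invariantCore_subset (g : ℂ → ℂ) (U' K : Set ℂ) : invariantCore g U' K ⊆ K :=
  sep_subset _ _

lemma inter_preimage_invariantCore (g : ℂ → ℂ) {U' K : Set ℂ} (hK : K ⊆ U') :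
    U' ∩ g ⁻¹' invariantCore g U' K = invariantCore g U' K := by
  ext z
  constructor
  · rintro ⟨hzU, -, hz⟩
    rw [grandOrbit_apply g hzU] at hz
    exact ⟨hz (mem_grandOrbit_self g U' z), hz⟩
  · rintro ⟨hzK, hz⟩
    rw [← grandOrbit_apply g (hK hzK)] at hz
    exact ⟨hK hzK, hz (mem_grandOrbit_self g U' (g z)), hz⟩

lemma subset_invariantCore {g : ℂ → ℂ} {U' K Y : Set ℂ} (hYK : Y ⊆ K)
    (hinv : U' ∩ g ⁻¹' Y = Y) : Y ⊆ invariantCore g U' K :=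
  fun _ hx => ⟨hYK hx, (grandOrbit_subset_of_inter_preimage_eq hinv hx).trans hYK⟩

lemma PLSetting.isOpen_image {g : ℂ → ℂ} {U' U : Set ℂ} {d : ℕ} (H : PLSetting g U' U d) :
    ∀ s ⊆ U', IsOpen s → IsOpen (g '' s) := by
  refine ((H.holo.analyticOnNhd H.disk'.1).is_constant_or_isOpen
    H.disk'.2.1.isPreconnected).resolve_left ?_
  rintro ⟨w, hw⟩
  have hUw : U = {w} := by
    refine (subset_singleton_iff_eq.1 fun y hy => ?_).resolve_left H.disk.2.1.nonempty.ne_empty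
    obtain ⟨z, hz, rfl⟩ := H.deg.1 y hy
    exact hw z hz
  exact not_isOpen_singleton w (hUw ▸ H.disk.1)

theorem maximal_invariant_in_hull_general {g : ℂ → ℂ} {U : Set ℂ} (hU : IsOpen U)
    (hg : ContinuousOn g U) (hopen : ∀ s ⊆ U, IsOpen s → IsOpen (g '' s))
    (hproper : ProperOn g U U) {X : Set ℂ} (hX : IsCompact X) (hXU : topHull X ⊆ U) :
    IsCompact (invariantCore g U (topHull X)) ∧
    U ∩ g ⁻¹' invariantCore g U (topHull X) = invariantCore g U (topHull X) ∧
    (∀ Y ⊆ topHull X, U ∩ g ⁻¹' Y = Y → Y ⊆ invariantCore g U (topHull X)) ∧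
    IsConnected (invariantCore g U (topHull X))ᶜ := by
  set A := invariantCore g U (topHull X)
  have hAX : A ⊆ topHull X := invariantCore_subset g U _
  have hinv : U ∩ g ⁻¹' A = A := inter_preimage_invariantCore g hXU
  have hmax : ∀ Y ⊆ topHull X, U ∩ g ⁻¹' Y = Y → Y ⊆ A := fun _ => subset_invariantCore
  have hclosure : closure A ⊆ topHull X := closure_minimal hAX (isClosed_topHull hX.isClosed)
  have hclosed : IsClosed A := closure_subset_iff_isClosed.1 <| hmax _ hclosure <|
    inter_preimage_closure_of_inter_preimage_eq hU hg hopen (hclosure.trans hXU) hinv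
  have hcompact : IsCompact A := (isCompact_topHull hX).of_isClosed_subset hclosed hAX
  have hhull : topHull A ⊆ topHull X := topHull_subset_topHull hX.isBounded hAX
  have hfull : topHull A = A := by
    refine Subset.antisymm (hmax _ hhull ?_) (subset_topHull A)
    exact inter_preimage_topHull_of_inter_preimage_eq hU hg hopen hcompact (hhull.trans hXU)
      (hproper _ (hhull.trans hXU) (isCompact_topHull hcompact)) hinv
  exact ⟨hcompact, hinv, hmax, hfull ▸ isConnected_compl_topHull hcompact.isBounded⟩

/-- **Proposition.** Let `X ⊆ U'` be a compact forward invariant set containing the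
postcritical set, and let `X* = {x ∈ hull(X) : GO(x) ⊆ hull(X)}`. Then `X*` is the maximal
(possibly empty) completely invariant compact contained in `hull(X)`, and `X*` is a full
compact set. -/
theorem maximal_invariant_in_hull {g : ℂ → ℂ} {U' U : Set ℂ} {d : ℕ}
    (H : PLSetting g U' U d) {X : Set ℂ}
    (hXcomp : IsCompact X) (hXsub : X ⊆ U') (hXinv : g '' X ⊆ X)
    (hPX : postCrit g U' ⊆ X) :
    IsCompact {x ∈ topHull X | grandOrbit g U' x ⊆ topHull X} ∧
    U' ∩ g ⁻¹' {x ∈ topHull X | grandOrbit g U' x ⊆ topHull X} =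
      {x ∈ topHull X | grandOrbit g U' x ⊆ topHull X} ∧
    (∀ Y : Set ℂ, IsCompact Y → Y ⊆ topHull X → U' ∩ g ⁻¹' Y = Y →
      Y ⊆ {x ∈ topHull X | grandOrbit g U' x ⊆ topHull X}) ∧
    IsConnected {x ∈ topHull X | grandOrbit g U' x ⊆ topHull X}ᶜ := by
  obtain ⟨hcompact, hinv, hmax, hconn⟩ := maximal_invariant_in_hull_general H.disk'.1
    H.holo.continuousOn H.isOpen_image (fun K hK => H.proper K (hK.trans H.subset)) hXcomp
    (topHull_subset_of_isSimplyConnected H.disk'.1 H.disk'.2.2 hXcomp hXsub)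
  exact ⟨hcompact, hinv, fun Y _ => hmax Y, hconn⟩
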